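/- Let d > 2s and let ρ be an admissible weight with exponents (γ₀,γ). Let u be a weak solution of the Cauchy problem ρ u_t + (-Δ)^s(u^m) = 0 with initial datum the positive finite Radon measure μ. Then mass is conserved: ∫_{ℝ^d} u(x,t) ρ(x) dx = μ(ℝ^d) for a.e. t > 0. -/

import Mathlib

open MeasureTheory Filter Topology Set
open scoped ENNReal NNReal

noncomputable section

/-- `d`-dimensional Euclidean space. -/
abbrev Ed (d : ℕ) : Type := EuclideanSpace ℝ (Fin d)

/-- An admissible weight with exponents `(γ₀, γ)` and constants `0 < c < C`:
a measurable, everywhere positive function comparable to `|x|^{-γ₀}` near the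
origin and to `|x|^{-γ}` at infinity. -/
def AdmissibleWeight (d : ℕ) (ρ : Ed d → ℝ) (γ₀ γ c C : ℝ) : Prop :=
  0 < c ∧ c < C ∧ Measurable ρ ∧ (∀ x, 0 < ρ x) ∧
    (∀ᵐ x ∂(volume : Measure (Ed d)), ‖x‖ ≤ 1 →
      c * ‖x‖ ^ (-γ₀) ≤ ρ x ∧ ρ x ≤ C * ‖x‖ ^ (-γ₀)) ∧
    (∀ᵐ x ∂(volume : Measure (Ed d)), 1 < ‖x‖ →
      c * ‖x‖ ^ (-γ) ≤ ρ x ∧ ρ x ≤ C * ‖x‖ ^ (-γ))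

/-- The Gagliardo bilinear form `E(v,w)` of order `s` with normalizing constant `κ`. -/
def gagliardoE (d : ℕ) (s κ : ℝ) (v w : Ed d → ℝ) : ℝ :=
  (κ / 2) * ∫ p : Ed d × Ed d,
    (v p.1 - v p.2) * (w p.1 - w p.2) / ‖p.1 - p.2‖ ^ ((d : ℝ) + 2 * s)

/-- The squared homogeneous fractional Sobolev seminorm `‖v‖_{Ḣ^s}² = E(v,v)`,
with values in `[0,∞]`. -/
def gagliardoSq (d : ℕ) (s κ : ℝ) (v : Ed d → ℝ) : ℝ≥0∞ :=
  ENNReal.ofReal (κ / 2) * ∫⁻ p : Ed d × Ed d,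
    ENNReal.ofReal ((v p.1 - v p.2) ^ 2 / ‖p.1 - p.2‖ ^ ((d : ℝ) + 2 * s))

/-- The weighted `L^p` norm `‖v‖_{p,ρ}`, valued in `[0,∞]`. -/
def wnorm (d : ℕ) (p : ℝ) (ρ v : Ed d → ℝ) : ℝ≥0∞ :=
  (∫⁻ x : Ed d, ENNReal.ofReal (|v x| ^ p * ρ x)) ^ (1 / p)

/-- Smooth compactly supported test functions on `ℝ^d × (0,∞)`. -/
def IsTestFn (d : ℕ) (φ : Ed d × ℝ → ℝ) : Prop :=
  ContDiff ℝ (⊤ : ℕ∞) φ ∧ HasCompactSupport φ ∧ tsupport φ ⊆ univ ×ˢ Ioi (0 : ℝ)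

/-- Conditions (i)–(iii) of the definition of weak solution of
`ρ u_t + (-Δ)^s(u^m) = 0` on `ℝ^d × (0,∞)` (no initial datum prescribed). -/
structure WeakSolCore (d : ℕ) (s m κ : ℝ) (ρ : Ed d → ℝ) (u : Ed d → ℝ → ℝ) : Prop where
  measurable : Measurable (Function.uncurry u)
  nonneg : ∀ x t, 0 ≤ u x t
  /-- (i), first part: `ess sup_{t>0} ∫ u(·,t) ρ < ∞`. -/
  massBound : ∃ M : ℝ, ∀ᵐ t ∂(volume.restrict (Ioi (0 : ℝ))),
    Integrable (fun x : Ed d => u x t * ρ x) ∧ (∫ x : Ed d, u x t * ρ x) ≤ M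
  /-- (i), second part: `u` essentially bounded on `ℝ^d × (τ,∞)` for every `τ > 0`. -/
  essBdd : ∀ τ : ℝ, 0 < τ → ∃ B : ℝ,
    ∀ᵐ p ∂(volume : Measure (Ed d × ℝ)), τ < p.2 → u p.1 p.2 ≤ B
  /-- (ii), first part: `‖u^m(·,t)‖_{Ḣ^s} < ∞` for a.e. `t > 0`. -/
  energyFinite : ∀ᵐ t ∂(volume.restrict (Ioi (0 : ℝ))),
    gagliardoSq d s κ (fun x => u x t ^ m) < ⊤
  /-- (ii), second part: `t ↦ ‖u^m(·,t)‖_{Ḣ^s}²` locally integrable on `(0,∞)`. -/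
  energyLocInt : ∀ t₁ t₂ : ℝ, 0 < t₁ → t₁ < t₂ →
    (∫⁻ t in Ioc t₁ t₂, gagliardoSq d s κ (fun x => u x t ^ m)) ≠ ⊤
  /-- (iii): the weak formulation against all test functions. -/
  weakForm : ∀ φ : Ed d × ℝ → ℝ, IsTestFn d φ →
    -(∫ t in Ioi (0 : ℝ), ∫ x : Ed d, u x t * deriv (fun τ => φ (x, τ)) t * ρ x)
      + ∫ t in Ioi (0 : ℝ),
          gagliardoE d s κ (fun x => u x t ^ m) (fun x => φ (x, t)) = 0

/-- Condition (iv): `ρ(·)u(·,t) → μ` as `t → 0` essentially, tested against all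
bounded continuous functions. -/
def HasInitialTrace (d : ℕ) (ρ : Ed d → ℝ) (u : Ed d → ℝ → ℝ)
    (μ : Measure (Ed d)) : Prop :=
  ∃ N : Set ℝ, volume N = 0 ∧
    ∀ φ : Ed d → ℝ, Continuous φ → (∃ B : ℝ, ∀ x, |φ x| ≤ B) →
      Tendsto (fun t => ∫ x : Ed d, φ x * (u x t * ρ x))
        (𝓝[(Ioi (0 : ℝ)) \ N] 0) (𝓝 (∫ x, φ x ∂μ))

/-- Weak solution of the Cauchy problem with initial datum `μ`. -/
def IsWeakSolution (d : ℕ) (s m κ : ℝ) (ρ : Ed d → ℝ) (μ : Measure (Ed d))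
    (u : Ed d → ℝ → ℝ) : Prop :=
  WeakSolCore d s m κ ρ u ∧ HasInitialTrace d ρ u μ


section KernelEstimate

variable {E : Type*} [NormedAddCommGroup E] [MeasurableSpace E] [BorelSpace E]
  [SecondCountableTopology E] {ν : Measure E} [SFinite ν] [ν.IsAddLeftInvariant]

/-- Pairing of a difference operator against an integrable even kernel: by symmetrisation only
the second differences of `φ` matter. -/
theorem abs_integral_diff_mul_diff_mul_kernel_le
    {v φ w G k : E → ℝ} {c : ℝ} (hv : Measurable v) (hφ : Measurable φ) (hk : Measurable k)
    (hk0 : ∀ z, 0 ≤ k z) (hkeven : ∀ z, k (-z) = k z)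
    (hvw : Integrable (fun x => |v x| * w x) ν) (hGk : Integrable (fun z => G z * k z) ν)
    (hneg : MeasurePreserving (fun z : E => -z) ν ν)
    (hfirst : ∀ x z, |φ x - φ (x + z)| * k z ≤ c * (w x * (G z * k z)))
    (hsecond : ∀ x z, |2 * φ x - φ (x + z) - φ (x - z)| ≤ w x * G z) :
    |∫ p : E × E, (v p.1 - v (p.1 + p.2)) * (φ p.1 - φ (p.1 + p.2)) * k p.2 ∂(ν.prod ν)|
      ≤ (∫ x, |v x| * w x ∂ν) * ∫ z, G z * k z ∂ν := by
  set H : E × E → ℝ := fun p => v p.1 * (φ p.1 - φ (p.1 + p.2)) * k p.2 with hH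
  have hHm : Measurable H := by
    have h1 : Measurable fun p : E × E => φ (p.1 + p.2) :=
      hφ.comp (measurable_fst.add measurable_snd)
    exact ((hv.comp measurable_fst).mul ((hφ.comp measurable_fst).sub h1)).mul
      (hk.comp measurable_snd)
  have hprod : Integrable (fun p : E × E => (|v p.1| * w p.1) * (G p.2 * k p.2)) (ν.prod ν) :=
    hvw.mul_prod hGk
  have hHi : Integrable H (ν.prod ν) := by
    refine (hprod.const_mul c).mono' hHm.aestronglyMeasurable (Eventually.of_forall fun p => ?_)
    have h := mul_le_mul_of_nonneg_left (hfirst p.1 p.2) (abs_nonneg (v p.1))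
    simp only [hH, Real.norm_eq_abs, abs_mul, abs_of_nonneg (hk0 p.2)]
    calc _ = |v p.1| * (|φ p.1 - φ (p.1 + p.2)| * k p.2) := by ring
      _ ≤ _ := h
      _ = _ := by ring
  have hT : MeasurePreserving (fun p : E × E => (p.1 + p.2, -p.2)) (ν.prod ν) (ν.prod ν) :=
    (measurePreserving_add_prod_neg ν ν).comp Measure.measurePreserving_swap
  have hS : MeasurePreserving (fun p : E × E => (p.1, -p.2)) (ν.prod ν) (ν.prod ν) :=
    (MeasurePreserving.id ν).prod hneg
  have hTi : Integrable (H ∘ fun p : E × E => (p.1 + p.2, -p.2)) (ν.prod ν) :=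
    (hT.integrable_comp hHi.aestronglyMeasurable).2 hHi
  have hSi : Integrable (H ∘ fun p : E × E => (p.1, -p.2)) (ν.prod ν) :=
    (hS.integrable_comp hHi.aestronglyMeasurable).2 hHi
  have key : ∀ {f : E × E → E × E}, MeasurePreserving f (ν.prod ν) (ν.prod ν) →
      ∫ p, (H ∘ f) p ∂(ν.prod ν) = ∫ p, H p ∂(ν.prod ν) := fun {f} hf => by
    have h := integral_map hf.measurable.aemeasurable
      (f := H) (μ := ν.prod ν) hHm.aestronglyMeasurable
    rw [hf.map_eq] at h
    exact h.symm
  have h1 : ∫ p : E × E, (v p.1 - v (p.1 + p.2)) * (φ p.1 - φ (p.1 + p.2)) * k p.2 ∂(ν.prod ν)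
      = ∫ p : E × E, v p.1 * (2 * φ p.1 - φ (p.1 + p.2) - φ (p.1 - p.2)) * k p.2
        ∂(ν.prod ν) := by
    trans (∫ p, H p ∂(ν.prod ν)) + ∫ p, H p ∂(ν.prod ν)
    · nth_rewrite 2 [← key hT]
      rw [← integral_add hHi hTi]
      refine integral_congr_ae (Eventually.of_forall fun p => ?_)
      simp only [hH, Function.comp, hkeven, add_neg_cancel_right]
      ring
    · nth_rewrite 2 [← key hS]
      rw [← integral_add hHi hSi]
      refine integral_congr_ae (Eventually.of_forall fun p => ?_)
      simp only [hH, Function.comp, hkeven, ← sub_eq_add_neg]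
      ring
  rw [h1, ← integral_prod_mul, ← Real.norm_eq_abs]
  refine norm_integral_le_of_norm_le hprod (Eventually.of_forall fun p => ?_)
  have h := mul_le_mul_of_nonneg_right
    (mul_le_mul_of_nonneg_left (hsecond p.1 p.2) (abs_nonneg (v p.1))) (hk0 p.2)
  simp only [Real.norm_eq_abs, abs_mul, abs_of_nonneg (hk0 p.2)]
  calc _ ≤ _ := h
    _ = _ := by ring

end KernelEstimate

/-- The Gagliardo form is controlled by second differences of its smooth argument. No
integrability of the form itself is needed. -/
theorem abs_gagliardoE_le {d : ℕ} {s κ : ℝ} (hκ : 0 < κ) {v φ w G : Ed d → ℝ}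
    (hv : Measurable v) (hφ : Measurable φ) (hG : Measurable G)
    (hw0 : ∀ x, 0 ≤ w x) (hG0 : ∀ z, 0 ≤ G z)
    (hvw : Integrable (fun x => |v x| * w x))
    (hGk : Integrable (fun z => G z * (1 / ‖z‖ ^ ((d : ℝ) + 2 * s))))
    (hfirst : ∀ ε > 0, ∃ c : ℝ, ∀ x z, ε < ‖z‖ → |φ x - φ (x + z)| ≤ c * (w x * G z))
    (hsecond : ∀ x z, |2 * φ x - φ (x + z) - φ (x - z)| ≤ w x * G z) :
    |gagliardoE d s κ v φ| ≤ (κ / 2) *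
      ((∫ x, |v x| * w x) * ∫ z, G z * (1 / ‖z‖ ^ ((d : ℝ) + 2 * s))) := by
  set q : ℝ := (d : ℝ) + 2 * s
  set F : Ed d × Ed d → ℝ := fun p =>
    (v p.1 - v (p.1 + p.2)) * (φ p.1 - φ (p.1 + p.2)) * (1 / ‖p.2‖ ^ q) with hF
  have hk0 : ∀ z : Ed d, 0 ≤ 1 / ‖z‖ ^ q := fun z => by positivity
  have hkm : Measurable fun z : Ed d => 1 / ‖z‖ ^ q := by fun_prop
  have hshear : (∫ p : Ed d × Ed d, (v p.1 - v p.2) * (φ p.1 - φ p.2) / ‖p.1 - p.2‖ ^ q)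
      = ∫ p, F p := by
    have hmp : MeasurePreserving (MeasurableEquiv.shearAddRight (Ed d)) volume volume :=
      measurePreserving_prod_add volume volume
    rw [← hmp.integral_comp' (fun p : Ed d × Ed d =>
      (v p.1 - v p.2) * (φ p.1 - φ p.2) / ‖p.1 - p.2‖ ^ q)]
    refine integral_congr_ae (Eventually.of_forall fun p => ?_)
    have e : MeasurableEquiv.shearAddRight (Ed d) p = (p.1, p.1 + p.2) := rfl
    simp only [hF, e, sub_add_cancel_left, norm_neg]
    ring
  have hI0 : 0 ≤ (∫ x, |v x| * w x) * ∫ z, G z * (1 / ‖z‖ ^ q) :=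
    mul_nonneg (integral_nonneg fun x => mul_nonneg (abs_nonneg _) (hw0 x))
      (integral_nonneg fun z => mul_nonneg (hG0 z) (hk0 z))
  have hmain : |∫ p, F p| ≤ (∫ x, |v x| * w x) * ∫ z, G z * (1 / ‖z‖ ^ q) := by
    by_cases hFi : Integrable F
    swap
    · rw [integral_undef hFi, abs_zero]; exact hI0
    let S : ℕ → Set (Ed d × Ed d) := fun n => {p | 1 / ((n : ℝ) + 1) < ‖p.2‖}
    have hSm : ∀ n, MeasurableSet (S n) := fun n =>
      measurableSet_lt measurable_const measurable_snd.norm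
    have hSmono : Monotone S := fun n k hnk p hp =>
      lt_of_le_of_lt (b := 1 / ((n : ℝ) + 1)) (Nat.one_div_le_one_div hnk) hp
    have hlim := tendsto_setIntegral_of_monotone (μ := volume) hSm hSmono hFi.integrableOn
    rw [setIntegral_eq_integral_of_forall_compl_eq_zero (s := ⋃ n, S n)] at hlim
    swap
    · intro p hp
      have hz : p.2 = 0 := by
        by_contra hne
        obtain ⟨n, hn⟩ := exists_nat_one_div_lt (norm_pos_iff.2 hne)
        exact hp (mem_iUnion.2 ⟨n, hn⟩)
      simp [hF, hz]
    refine le_of_tendsto hlim.abs (Eventually.of_forall fun n => ?_)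
    set kn : Ed d → ℝ := {z : Ed d | 1 / ((n : ℝ) + 1) < ‖z‖}.indicator
      (fun z => 1 / ‖z‖ ^ q) with hkn
    have hset : MeasurableSet {z : Ed d | 1 / ((n : ℝ) + 1) < ‖z‖} :=
      measurableSet_lt measurable_const measurable_norm
    have hkn_mem : ∀ z, 1 / ((n : ℝ) + 1) < ‖z‖ → kn z = 1 / ‖z‖ ^ q := fun z hz =>
      indicator_of_mem (s := {z : Ed d | 1 / ((n : ℝ) + 1) < ‖z‖}) hz _
    have hkn_notMem : ∀ z, ¬ 1 / ((n : ℝ) + 1) < ‖z‖ → kn z = 0 := fun z hz =>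
      indicator_of_notMem (s := {z : Ed d | 1 / ((n : ℝ) + 1) < ‖z‖}) hz _
    have hkn0 : ∀ z, 0 ≤ kn z := fun z => indicator_nonneg (fun z _ => hk0 z) z
    have hknle : ∀ z, kn z ≤ 1 / ‖z‖ ^ q := fun z => indicator_le_self' (fun z _ => hk0 z) z
    have hGkn : Integrable fun z => G z * kn z := by
      refine hGk.mono' (hG.mul (hkm.indicator hset)).aestronglyMeasurable
        (Eventually.of_forall fun z => ?_)
      rw [Real.norm_of_nonneg (mul_nonneg (hG0 z) (hkn0 z))]
      exact mul_le_mul_of_nonneg_left (hknle z) (hG0 z)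
    obtain ⟨c, hc⟩ := hfirst (1 / ((n : ℝ) + 1)) (by positivity)
    have hest := abs_integral_diff_mul_diff_mul_kernel_le (ν := (volume : Measure (Ed d)))
      (c := c) hv hφ (hkm.indicator hset) hkn0
      (fun z => by simp [indicator]) hvw hGkn
      (Measure.measurePreserving_neg _)
      (fun x z => by
        by_cases hz : 1 / ((n : ℝ) + 1) < ‖z‖
        · have := mul_le_mul_of_nonneg_right (hc x z hz) (hkn0 z)
          calc _ ≤ _ := this
            _ = _ := by ring
        · change _ * kn z ≤ c * (_ * (_ * kn z))
          simp [hkn_notMem z hz]) hsecond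
    have heq : ∫ p in S n, F p = ∫ p : Ed d × Ed d,
        (v p.1 - v (p.1 + p.2)) * (φ p.1 - φ (p.1 + p.2)) * kn p.2 := by
      rw [← integral_indicator (hSm n)]
      refine integral_congr_ae (Eventually.of_forall fun p => ?_)
      by_cases hp : 1 / ((n : ℝ) + 1) < ‖p.2‖
      · have h1 : p ∈ S n := hp
        simp only [indicator_of_mem h1, hkn_mem _ hp, hF]
      · have h1 : p ∉ S n := hp
        simp only [indicator_of_notMem h1, hkn_notMem _ hp, mul_zero]
    rw [heq]
    refine hest.trans (mul_le_mul_of_nonneg_left ?_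
      (integral_nonneg fun x => mul_nonneg (abs_nonneg _) (hw0 x)))
    exact integral_mono hGkn hGk fun z => mul_le_mul_of_nonneg_left (hknle z) (hG0 z)
  unfold gagliardoE
  rw [hshear, abs_mul, abs_of_pos (half_pos hκ)]
  exact mul_le_mul_of_nonneg_left hmain (half_pos hκ).le

/-- The second difference of a smooth compactly supported function is quadratically small. -/
theorem exists_abs_second_difference_le {E : Type*} [NormedAddCommGroup E] [NormedSpace ℝ E]
    {χ : E → ℝ} (hχ : ContDiff ℝ 2 χ) (hc : HasCompactSupport χ) :
    ∃ A : ℝ, 0 < A ∧ ∀ x z, |2 * χ x - χ (x + z) - χ (x - z)| ≤ A * ‖z‖ ^ 2 := by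
  obtain ⟨L, hL⟩ := ContDiff.lipschitzWith_of_hasCompactSupport (hc.fderiv (𝕜 := ℝ))
    (hχ.fderiv_right (m := 1) (by norm_num)) one_ne_zero
  refine ⟨2 * L + 1, by positivity, fun x z => ?_⟩
  have hdiff : Differentiable ℝ χ := hχ.differentiable (by norm_num)
  have hplus : ∀ t : ℝ, HasDerivAt (fun t : ℝ => χ (x + t • z)) (fderiv ℝ χ (x + t • z) z) t :=
    fun t => by
      have h1 : HasDerivAt (fun t : ℝ => x + t • z) z t := by
        simpa using ((hasDerivAt_id t).smul_const z).const_add x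
      exact (hdiff _).hasFDerivAt.comp_hasDerivAt t h1
  have hminus : ∀ t : ℝ, HasDerivAt (fun t : ℝ => χ (x - t • z)) (fderiv ℝ χ (x - t • z) (-z)) t :=
    fun t => by
      have h1 : HasDerivAt (fun t : ℝ => x - t • z) (-z) t := by
        simpa using ((hasDerivAt_id t).smul_const z).const_sub x
      exact (hdiff _).hasFDerivAt.comp_hasDerivAt t h1
  have hmvt := (convex_Icc (0 : ℝ) 1).norm_image_sub_le_of_norm_hasDerivWithin_le
    (x := 0) (y := 1) (C := (2 * L + 1) * ‖z‖ ^ 2)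
    (fun t _ => ((hplus t).add (hminus t)).hasDerivWithinAt) (fun t ht => ?_)
    (by simp) (by simp)
  · simp only [Pi.add_apply, one_smul, zero_smul, add_zero, sub_zero, norm_one, mul_one,
      Real.norm_eq_abs] at hmvt
    calc |2 * χ x - χ (x + z) - χ (x - z)| = |χ (x + z) + χ (x - z) - (χ x + χ x)| := by
          rw [abs_sub_comm (χ (x + z) + χ (x - z))]; congr 1; ring
      _ ≤ _ := hmvt
  · have h1 : ‖fderiv ℝ χ (x + t • z) - fderiv ℝ χ (x - t • z)‖ ≤ L * (2 * ‖z‖) := by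
      refine (hL.norm_sub_le _ _).trans (mul_le_mul_of_nonneg_left ?_ L.2)
      have : x + t • z - (x - t • z) = (2 * t) • z := by module
      rw [this, norm_smul, Real.norm_of_nonneg (by linarith [ht.1])]
      exact mul_le_mul_of_nonneg_right (by linarith [ht.2]) (norm_nonneg z)
    have h2 : fderiv ℝ χ (x + t • z) z + fderiv ℝ χ (x - t • z) (-z)
        = (fderiv ℝ χ (x + t • z) - fderiv ℝ χ (x - t • z)) z := by
      simp [sub_eq_add_neg]
    rw [h2]
    refine (ContinuousLinearMap.le_opNorm _ _).trans ?_
    calc _ ≤ L * (2 * ‖z‖) * ‖z‖ := mul_le_mul_of_nonneg_right h1 (norm_nonneg z)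
      _ ≤ _ := by nlinarith [sq_nonneg ‖z‖]

/-- A majorant, weighted by a power of the distance, for second differences of cutoffs. -/
def diffMajorant (γ A r : ℝ) : ℝ := (3 + r) ^ γ * min (A * r ^ 2) 4

theorem diffMajorant_nonneg {γ A r : ℝ} (hA : 0 < A) (hr : 0 ≤ r) : 0 ≤ diffMajorant γ A r :=
  mul_nonneg (Real.rpow_nonneg (by linarith) _) (le_min (by positivity) (by norm_num))

theorem measurable_diffMajorant (γ A : ℝ) : Measurable (diffMajorant γ A) := by
  unfold diffMajorant; fun_prop

theorem integrable_diffMajorant_mul_kernel {d : ℕ} {s γ A : ℝ} (hd : 0 < d)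
    (hs1 : s < 1) (hγ0 : 0 ≤ γ) (hγs : γ < 2 * s) (hA : 0 < A) :
    Integrable (fun z : Ed d => diffMajorant γ A ‖z‖ * (1 / ‖z‖ ^ ((d : ℝ) + 2 * s))) := by
  have : Nonempty (Fin d) := ⟨⟨0, hd⟩⟩
  have : Nontrivial (Ed d) := inferInstance
  have hd1 : ((d - 1 : ℕ) : ℝ) = (d : ℝ) - 1 := by
    rw [Nat.cast_sub hd]; simp
  have hpow : ∀ r : ℝ, 0 < r → r ^ (d - 1) * (1 / r ^ ((d : ℝ) + 2 * s)) = r ^ (-1 - 2 * s) := by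
    intro r hr
    rw [← Real.rpow_natCast, one_div, ← Real.rpow_neg hr.le, ← Real.rpow_add hr, hd1]
    congr 1; ring
  refine (integrable_fun_norm_addHaar (volume : Measure (Ed d))
    (f := fun r => diffMajorant γ A r * (1 / r ^ ((d : ℝ) + 2 * s)))).2 ?_
  rw [finrank_euclideanSpace_fin]
  have hmeas : Measurable fun y : ℝ =>
      y ^ (d - 1) • (diffMajorant γ A y * (1 / y ^ ((d : ℝ) + 2 * s))) := by
    have := measurable_diffMajorant γ A
    simp only [smul_eq_mul]
    fun_prop
  have hform : ∀ r : ℝ, 0 < r → ‖r ^ (d - 1) • (diffMajorant γ A r *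
      (1 / r ^ ((d : ℝ) + 2 * s)))‖ = diffMajorant γ A r * r ^ (-1 - 2 * s) := fun r hr => by
    rw [smul_eq_mul, mul_left_comm, hpow r hr, Real.norm_of_nonneg]
    exact mul_nonneg (diffMajorant_nonneg hA hr.le) (Real.rpow_nonneg hr.le _)
  rw [← Ioc_union_Ioi_eq_Ioi (zero_le_one (α := ℝ))]
  refine IntegrableOn.union ?_ ?_
  · have hI : IntegrableOn (fun r : ℝ => (4 ^ γ * A) * r ^ (1 - 2 * s)) (Ioc 0 1) := by
      have := (intervalIntegral.intervalIntegrable_rpow' (a := 0) (b := 1) (r := 1 - 2 * s)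
        (by linarith))
      rw [intervalIntegrable_iff_integrableOn_Ioc_of_le zero_le_one] at this
      exact this.const_mul _
    refine hI.mono' hmeas.aestronglyMeasurable.restrict ?_
    filter_upwards [ae_restrict_mem measurableSet_Ioc] with r hr
    rw [hform r hr.1]
    have h1 : (3 + r) ^ γ ≤ 4 ^ γ :=
      Real.rpow_le_rpow (by linarith [hr.1]) (by linarith [hr.2]) hγ0
    have h2 : r ^ 2 * r ^ (-1 - 2 * s) = r ^ (1 - 2 * s) := by
      rw [← Real.rpow_natCast, ← Real.rpow_add hr.1]; congr 1; push_cast; ring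
    have h3 := Real.rpow_nonneg hr.1.le (-1 - 2 * s)
    calc diffMajorant γ A r * r ^ (-1 - 2 * s)
        ≤ (4 ^ γ * (A * r ^ 2)) * r ^ (-1 - 2 * s) := by
          refine mul_le_mul_of_nonneg_right ?_ h3
          exact mul_le_mul h1 (min_le_left _ _) (le_min (by positivity) (by norm_num))
            (by positivity)
      _ = _ := by rw [← h2]; ring
  · have hI : IntegrableOn (fun r : ℝ => (4 ^ γ * 4) * r ^ (γ - 1 - 2 * s)) (Ioi 1) :=
      (integrableOn_Ioi_rpow_of_lt (by linarith) one_pos).const_mul _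
    refine hI.mono' hmeas.aestronglyMeasurable.restrict ?_
    filter_upwards [ae_restrict_mem measurableSet_Ioi] with r hr
    have hr1 : (1 : ℝ) < r := hr
    have hr0 : 0 < r := one_pos.trans hr1
    rw [hform r hr0]
    have h1 : (3 + r) ^ γ ≤ 4 ^ γ * r ^ γ := by
      rw [← Real.mul_rpow (by norm_num) hr0.le]
      exact Real.rpow_le_rpow (by linarith) (by linarith) hγ0
    have h2 : r ^ γ * r ^ (-1 - 2 * s) = r ^ (γ - 1 - 2 * s) := by
      rw [← Real.rpow_add hr0]; congr 1; ring
    calc diffMajorant γ A r * r ^ (-1 - 2 * s)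
        ≤ ((4 ^ γ * r ^ γ) * 4) * r ^ (-1 - 2 * s) := by
          refine mul_le_mul_of_nonneg_right ?_ (Real.rpow_nonneg hr0.le _)
          exact mul_le_mul h1 (min_le_right _ _) (le_min (by positivity) (by norm_num))
            (by positivity)
      _ = _ := by rw [← h2]; ring

theorem diffMajorant_mul_kernel_smul {d : ℕ} {s γ A R : ℝ} (hR : 0 < R) (z : Ed d) :
    diffMajorant γ A ‖R⁻¹ • z‖ * (1 / ‖z‖ ^ ((d : ℝ) + 2 * s)) =
      R ^ (-((d : ℝ) + 2 * s)) *
        (diffMajorant γ A ‖R⁻¹ • z‖ * (1 / ‖R⁻¹ • z‖ ^ ((d : ℝ) + 2 * s))) := by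
  have : ‖z‖ = R * ‖R⁻¹ • z‖ := by
    rw [norm_smul, norm_inv, Real.norm_of_nonneg hR.le, mul_inv_cancel_left₀ hR.ne']
  have hq : ‖z‖ ^ ((d : ℝ) + 2 * s) =
      R ^ ((d : ℝ) + 2 * s) * ‖R⁻¹ • z‖ ^ ((d : ℝ) + 2 * s) := by
    rw [← Real.mul_rpow hR.le (norm_nonneg _), ← this]
  rw [hq, Real.rpow_neg hR.le]
  ring

theorem integrable_diffMajorant_mul_kernel_smul {d : ℕ} {s γ A R : ℝ} (hd : 0 < d)
    (hs1 : s < 1) (hγ0 : 0 ≤ γ) (hγs : γ < 2 * s) (hA : 0 < A) (hR : 0 < R) :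
    Integrable
      (fun z : Ed d => diffMajorant γ A ‖R⁻¹ • z‖ * (1 / ‖z‖ ^ ((d : ℝ) + 2 * s))) := by
  simp only [diffMajorant_mul_kernel_smul hR]
  exact ((integrable_comp_smul_iff volume
    (fun z : Ed d => diffMajorant γ A ‖z‖ * (1 / ‖z‖ ^ ((d : ℝ) + 2 * s)))
    (inv_ne_zero hR.ne')).2 (integrable_diffMajorant_mul_kernel hd hs1 hγ0 hγs hA)).const_mul _

theorem integral_diffMajorant_mul_kernel_smul {d : ℕ} {s γ A R : ℝ} (hR : 0 < R) :
    ∫ z : Ed d, diffMajorant γ A ‖R⁻¹ • z‖ * (1 / ‖z‖ ^ ((d : ℝ) + 2 * s)) =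
      R ^ (-(2 * s)) * ∫ z : Ed d, diffMajorant γ A ‖z‖ * (1 / ‖z‖ ^ ((d : ℝ) + 2 * s)) := by
  simp only [diffMajorant_mul_kernel_smul hR]
  rw [integral_const_mul, Measure.integral_comp_smul volume
    (fun z : Ed d => diffMajorant γ A ‖z‖ * (1 / ‖z‖ ^ ((d : ℝ) + 2 * s))),
    finrank_euclideanSpace_fin, inv_pow, inv_inv, abs_of_pos (pow_pos hR d), smul_eq_mul,
    ← mul_assoc, ← Real.rpow_natCast, ← Real.rpow_add hR]
  congr 2; ring

/-- Data of a radial cutoff whose differences are controlled by `diffMajorant`. -/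
structure IsCutoff (d : ℕ) (γ A : ℝ) (χ : Ed d → ℝ) : Prop where
  contDiff : ContDiff ℝ (⊤ : ℕ∞) χ
  hasCompactSupport : HasCompactSupport χ
  nonneg : ∀ x, 0 ≤ χ x
  le_one : ∀ x, χ x ≤ 1
  eq_one : ∀ x, ‖x‖ ≤ 1 → χ x = 1
  first : ∀ x z, |χ x - χ (x + z)| ≤ (1 + ‖x‖) ^ (-γ) * (3 + ‖z‖) ^ γ
  second : ∀ x z, |2 * χ x - χ (x + z) - χ (x - z)| ≤
    (1 + ‖x‖) ^ (-γ) * diffMajorant γ A ‖z‖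

theorem exists_isCutoff (d : ℕ) {γ : ℝ} (hγ0 : 0 ≤ γ) :
    ∃ (A : ℝ) (χ : Ed d → ℝ), 0 < A ∧ IsCutoff d γ A χ := by
  let b : ContDiffBump (0 : Ed d) := ⟨1, 2, one_pos, one_lt_two⟩
  obtain ⟨A, hA, hsec⟩ := exists_abs_second_difference_le (χ := (b : Ed d → ℝ))
    b.contDiff b.hasCompactSupport
  have hzero : ∀ x : Ed d, 2 ≤ ‖x‖ → b x = 0 := fun x hx =>
    b.zero_of_le_dist (by simpa using hx)
  have hone : ∀ x z : Ed d, ‖x‖ ≤ 2 + ‖z‖ → 1 ≤ (1 + ‖x‖) ^ (-γ) * (3 + ‖z‖) ^ γ := by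
    intro x z h
    have h0 : 0 < 1 + ‖x‖ := by positivity
    rw [Real.rpow_neg h0.le, ← div_eq_inv_mul, one_le_div (by positivity)]
    exact Real.rpow_le_rpow h0.le (by linarith) hγ0
  have hfar : ∀ x z : Ed d, 2 + ‖z‖ < ‖x‖ → b x = 0 ∧ b (x + z) = 0 ∧ b (x - z) = 0 := by
    intro x z h
    refine ⟨hzero _ (by linarith [norm_nonneg z]), hzero _ ?_, hzero _ ?_⟩
    · have := norm_sub_le_norm_add x z; linarith
    · have := norm_sub_norm_le x z; linarith
  refine ⟨A, b, hA, b.contDiff, b.hasCompactSupport, fun x => b.nonneg, fun x => b.le_one,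
    fun x hx => b.one_of_mem_closedBall (by simpa using hx), fun x z => ?_, fun x z => ?_⟩
  · rcases le_or_gt ‖x‖ (2 + ‖z‖) with h | h
    · refine le_trans ?_ (hone x z h)
      rw [abs_le]
      constructor <;> linarith [b.nonneg (x := x), b.nonneg (x := x + z), b.le_one (x := x),
        b.le_one (x := x + z)]
    · obtain ⟨h1, h2, -⟩ := hfar x z h
      rw [h1, h2, sub_zero, abs_zero]
      positivity
  · have hmin0 : 0 ≤ min (A * ‖z‖ ^ 2) 4 := le_min (by positivity) (by norm_num)
    rcases le_or_gt ‖x‖ (2 + ‖z‖) with h | h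
    · have h4 : |2 * b x - b (x + z) - b (x - z)| ≤ 4 := by
        rw [abs_le]
        constructor <;> linarith [b.nonneg (x := x), b.nonneg (x := x + z), b.le_one (x := x),
          b.le_one (x := x + z), b.nonneg (x := x - z), b.le_one (x := x - z)]
      calc _ ≤ min (A * ‖z‖ ^ 2) 4 := le_min (hsec x z) h4
        _ ≤ ((1 + ‖x‖) ^ (-γ) * (3 + ‖z‖) ^ γ) * min (A * ‖z‖ ^ 2) 4 :=
          le_mul_of_one_le_left hmin0 (hone x z h)
        _ = _ := by unfold diffMajorant; ring
    · obtain ⟨h1, h2, h3⟩ := hfar x z h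
      rw [h1, h2, h3]
      simp only [mul_zero, sub_zero, abs_zero]
      exact mul_nonneg (by positivity) (diffMajorant_nonneg hA (norm_nonneg z))

theorem IsCutoff.exists_first_le {d : ℕ} {γ A : ℝ} {χ : Ed d → ℝ} (hχ : IsCutoff d γ A χ)
    (hA : 0 < A) {ε : ℝ} (hε : 0 < ε) :
    ∃ c : ℝ, ∀ x z, ε < ‖z‖ →
      |χ x - χ (x + z)| ≤ c * ((1 + ‖x‖) ^ (-γ) * diffMajorant γ A ‖z‖) := by
  have hm : 0 < min (A * ε ^ 2) 4 := lt_min (by positivity) (by norm_num)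
  refine ⟨(min (A * ε ^ 2) 4)⁻¹, fun x z hz => (hχ.first x z).trans ?_⟩
  have h1 : 1 ≤ (min (A * ε ^ 2) 4)⁻¹ * min (A * ‖z‖ ^ 2) 4 := by
    rw [← div_eq_inv_mul, one_le_div hm]
    gcongr
  calc _ ≤ ((1 + ‖x‖) ^ (-γ) * (3 + ‖z‖) ^ γ) *
        ((min (A * ε ^ 2) 4)⁻¹ * min (A * ‖z‖ ^ 2) 4) :=
      le_mul_of_one_le_right (by positivity) h1
    _ = _ := by unfold diffMajorant; ring

/-- The Gagliardo form against a rescaled cutoff. -/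
theorem IsCutoff.abs_gagliardoE_smul_le {d : ℕ} {s κ γ A R : ℝ} {χ v : Ed d → ℝ}
    (hχ : IsCutoff d γ A χ) (hd : 0 < d) (hκ : 0 < κ) (hs1 : s < 1) (hγ0 : 0 ≤ γ)
    (hγs : γ < 2 * s) (hA : 0 < A) (hR : 0 < R) (hv : Measurable v)
    (hvw : Integrable (fun x => |v x| * (1 + ‖R⁻¹ • x‖) ^ (-γ))) :
    |gagliardoE d s κ v (fun x => χ (R⁻¹ • x))| ≤ (κ / 2) *
      ((∫ x, |v x| * (1 + ‖R⁻¹ • x‖) ^ (-γ)) * (R ^ (-(2 * s)) *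
        ∫ z : Ed d, diffMajorant γ A ‖z‖ * (1 / ‖z‖ ^ ((d : ℝ) + 2 * s)))) := by
  rw [← integral_diffMajorant_mul_kernel_smul hR]
  refine abs_gagliardoE_le (w := fun x => (1 + ‖R⁻¹ • x‖) ^ (-γ))
    (G := fun z => diffMajorant γ A ‖R⁻¹ • z‖) hκ hv
    (hχ.contDiff.continuous.measurable.comp (measurable_const_smul _))
    ((measurable_diffMajorant γ A).comp (measurable_const_smul R⁻¹).norm)
    (fun x => by positivity) (fun z => diffMajorant_nonneg hA (norm_nonneg _)) hvw
    (integrable_diffMajorant_mul_kernel_smul hd hs1 hγ0 hγs hA hR) (fun ε hε => ?_)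
    (fun x z => ?_)
  · obtain ⟨c, hc⟩ := hχ.exists_first_le hA (ε := R⁻¹ * ε) (by positivity)
    refine ⟨c, fun x z hz => ?_⟩
    rw [smul_add]
    refine hc _ _ ?_
    rw [norm_smul, Real.norm_of_nonneg (by positivity)]
    exact mul_lt_mul_of_pos_left hz (by positivity)
  · rw [smul_add, smul_sub]
    exact hχ.second _ _

/-- A locally integrable function on `(0,∞)` with vanishing distributional derivative is constant
almost everywhere. -/
theorem ae_eq_const_of_integral_deriv_mul_eq_zero {f : ℝ → ℝ}
    (hf : LocallyIntegrableOn f (Ioi 0))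
    (h : ∀ θ : ℝ → ℝ, ContDiff ℝ (⊤ : ℕ∞) θ → HasCompactSupport θ → tsupport θ ⊆ Ioi 0 →
      ∫ t, deriv θ t * f t = 0) :
    ∃ K : ℝ, ∀ᵐ t, t ∈ Ioi (0 : ℝ) → f t = K := by
  let b : ContDiffBump (2 : ℝ) := ⟨1 / 2, 1, by norm_num, by norm_num⟩
  set η : ℝ → ℝ := b.normed volume with hη
  have hη1 : ∫ t, η t = 1 := b.integral_normed
  have hηs : ContDiff ℝ (⊤ : ℕ∞) η := b.contDiff_normed
  have hηc : HasCompactSupport η := b.hasCompactSupport_normed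
  have hηt : tsupport η ⊆ Ioi 0 := by
    rw [hη, b.tsupport_normed_eq]
    intro t ht
    have h1 : |t - 2| ≤ 1 := by simpa [Real.dist_eq] using ht
    rw [mem_Ioi]
    linarith [(abs_le.1 h1).1]
  have hInt : ∀ g : ℝ → ℝ, Continuous g → HasCompactSupport g → tsupport g ⊆ Ioi 0 →
      Integrable fun t => g t * f t := by
    intro g hg hgc hgt
    have h1 : IntegrableOn (fun t => g t * f t) (tsupport g) :=
      ((hf.integrableOn_compact_subset hgt hgc).continuousOn_mul hg.continuousOn hgc)
    rw [← integrableOn_iff_integrable_of_support_subset]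
    · exact h1
    · exact fun t ht => subset_tsupport g (left_ne_zero_of_mul ht)
  refine ⟨∫ t, η t * f t, ?_⟩
  suffices hz : ∀ᵐ t, t ∈ Ioi (0 : ℝ) → f t - ∫ t, η t * f t = 0 by
    filter_upwards [hz] with t ht h0 using sub_eq_zero.1 (ht h0)
  refine isOpen_Ioi.ae_eq_zero_of_integral_contDiff_smul_eq_zero
    (hf.sub ((locallyIntegrable_const _).locallyIntegrableOn _)) fun ψ hψ hψc hψt => ?_
  set g : ℝ → ℝ := fun t => ψ t - (∫ r, ψ r) * η t with hg
  have hgs : ContDiff ℝ (⊤ : ℕ∞) g := hψ.sub (contDiff_const.mul hηs)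
  have hψi : Integrable ψ := hψ.continuous.integrable_of_hasCompactSupport hψc
  have hηi : Integrable η := hηs.continuous.integrable_of_hasCompactSupport hηc
  have hgint : ∫ t, g t = 0 := by
    rw [hg, integral_sub hψi (hηi.const_mul _), integral_const_mul, hη1, mul_one, sub_self]
  obtain ⟨a₀, b₀, ha0, hga, hgb⟩ : ∃ a₀ b₀ : ℝ, 0 < a₀ ∧ (∀ t ≤ a₀, g t = 0) ∧
      ∀ t, b₀ ≤ t → g t = 0 := by
    have hK : IsCompact (insert (1 : ℝ) (tsupport ψ ∪ tsupport η)) := (hψc.union hηc).insert 1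
    obtain ⟨a, ha, hamin⟩ := hK.exists_isLeast (insert_nonempty _ _)
    obtain ⟨c, -, hcmax⟩ := hK.exists_isGreatest (insert_nonempty _ _)
    have hapos : 0 < a := by
      rcases ha with rfl | ha | ha
      · exact one_pos
      · exact hψt ha
      · exact hηt ha
    have hout : ∀ t, t ∉ insert (1 : ℝ) (tsupport ψ ∪ tsupport η) → g t = 0 := by
      intro t ht
      have h1 : t ∉ tsupport ψ := fun h' => ht (Or.inr (Or.inl h'))
      have h2 : t ∉ tsupport η := fun h' => ht (Or.inr (Or.inr h'))
      simp [hg, image_eq_zero_of_notMem_tsupport h1, image_eq_zero_of_notMem_tsupport h2]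
    exact ⟨a / 2, c + 1, half_pos hapos,
      fun t ht => hout t fun h' => by linarith [hamin h'],
      fun t ht => hout t fun h' => by linarith [hcmax h']⟩
  set θ : ℝ → ℝ := fun t => ∫ r in a₀..t, g r with hθ
  have hderiv : ∀ t, HasDerivAt θ (g t) t := fun t =>
    intervalIntegral.integral_hasDerivAt_right (hgs.continuous.intervalIntegrable _ _)
      (hgs.continuous.stronglyMeasurableAtFilter _ _) hgs.continuous.continuousAt
  have hderiv' : deriv θ = g := funext fun t => (hderiv t).deriv
  have hθs : ContDiff ℝ (⊤ : ℕ∞) θ := by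
    refine contDiff_infty_iff_deriv.2 ⟨fun t => (hderiv t).differentiableAt, ?_⟩
    rw [hderiv']; exact hgs
  have hsupp : Function.support θ ⊆ Icc a₀ b₀ := by
    intro t ht
    by_contra hcon
    refine ht ?_
    rcases le_total t a₀ with h1 | h1
    · have : EqOn g (fun _ => 0) (uIcc a₀ t) := fun r hr => by
        rw [uIcc_of_ge h1] at hr
        exact hga r hr.2
      simp only [hθ, intervalIntegral.integral_congr this, intervalIntegral.integral_zero]
    · have h2 : b₀ ≤ t := by
        by_contra h3
        exact hcon ⟨h1, (not_le.1 h3).le⟩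
      simp only [hθ]
      rw [intervalIntegral.integral_of_le h1,
        setIntegral_eq_integral_of_forall_compl_eq_zero, hgint]
      intro r hr
      by_cases h3 : r ≤ a₀
      · exact hga r h3
      · refine hgb r (h2.trans ?_)
        by_contra h4
        exact hr ⟨not_le.1 h3, (not_le.1 h4).le⟩
  have htsupp : tsupport θ ⊆ Icc a₀ b₀ := closure_minimal hsupp isClosed_Icc
  have hzero := h θ hθs (HasCompactSupport.of_support_subset_isCompact isCompact_Icc hsupp)
    fun t ht => ha0.trans_le (htsupp ht).1
  rw [hderiv'] at hzero
  have hψf := hInt ψ hψ.continuous hψc hψt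
  have hηf := hInt η hηs.continuous hηc hηt
  have e1 : ∫ t, g t * f t = (∫ t, ψ t * f t) - (∫ r, ψ r) * ∫ t, η t * f t := by
    rw [← integral_const_mul, ← integral_sub hψf (hηf.const_mul _)]
    exact integral_congr_ae (Eventually.of_forall fun t => by simp only [hg]; ring)
  have e2 : ∫ t, ψ t • (f t - ∫ r, η r * f r)
      = (∫ t, ψ t * f t) - (∫ r, ψ r) * ∫ t, η t * f t := by
    rw [← integral_mul_const, ← integral_sub hψf (hψi.mul_const _)]
    exact integral_congr_ae (Eventually.of_forall fun t => by simp only [smul_eq_mul]; ring)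
  exact e2.trans (e1.symm.trans hzero)

theorem AdmissibleWeight.ae_rpow_le {d : ℕ} {ρ : Ed d → ℝ} {γ₀ γ c C : ℝ}
    (hρ : AdmissibleWeight d ρ γ₀ γ c C) (hd : 0 < d) (hγ₀0 : 0 ≤ γ₀) (hγ0 : 0 ≤ γ) :
    ∀ᵐ x : Ed d, (1 + ‖x‖) ^ (-γ) ≤ c⁻¹ * ρ x := by
  have : Nonempty (Fin d) := ⟨⟨0, hd⟩⟩
  have : Nontrivial (Ed d) := inferInstance
  obtain ⟨hc, -, -, -, hin, hout⟩ := hρ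
  have hne : ∀ᵐ x : Ed d, x ≠ 0 := by simp [ae_iff, measure_singleton]
  filter_upwards [hin, hout, hne] with x h1 h2 h0
  have hx : 0 < ‖x‖ := norm_pos_iff.2 h0
  rw [← div_eq_inv_mul, le_div_iff₀' hc]
  rcases le_or_gt ‖x‖ 1 with h | h
  · refine le_trans (mul_le_mul_of_nonneg_left ?_ hc.le) (h1 h).1
    exact (Real.rpow_le_one_of_one_le_of_nonpos (by linarith) (by linarith)).trans
      (Real.one_le_rpow_of_pos_of_le_one_of_nonpos hx h (by linarith))
  · refine le_trans (mul_le_mul_of_nonneg_left ?_ hc.le) (h2 h).1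
    exact Real.rpow_le_rpow_of_nonpos hx (by linarith) (by linarith)

/-- The nonlinear flux of a bounded density of bounded mass through a large cutoff is small. -/
theorem IsCutoff.abs_gagliardoE_rpow_le {d : ℕ} {s κ γ₀ γ c C A R m B M : ℝ}
    {χ ρ f : Ed d → ℝ} (hχ : IsCutoff d γ A χ) (hρ : AdmissibleWeight d ρ γ₀ γ c C)
    (hd : 0 < d) (hκ : 0 < κ) (hs1 : s < 1) (hγ₀0 : 0 ≤ γ₀) (hγ0 : 0 ≤ γ) (hγs : γ < 2 * s)
    (hA : 0 < A) (hm : 1 < m) (hR : 1 ≤ R) (hf : Measurable f) (hf0 : ∀ x, 0 ≤ f x)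
    (hB0 : 0 ≤ B) (hfB : ∀ᵐ x, f x ≤ B) (hfρ : Integrable fun x => f x * ρ x)
    (hfM : ∫ x, f x * ρ x ≤ M) :
    |gagliardoE d s κ (fun x => f x ^ m) (fun x => χ (R⁻¹ • x))| ≤
      (κ / 2) * (B ^ (m - 1) * c⁻¹ * M *
        ∫ z : Ed d, diffMajorant γ A ‖z‖ * (1 / ‖z‖ ^ ((d : ℝ) + 2 * s))) *
          R ^ (γ - 2 * s) := by
  have hR0 : 0 < R := one_pos.trans_le hR
  have hc : 0 < c := hρ.1
  set I := ∫ z : Ed d, diffMajorant γ A ‖z‖ * (1 / ‖z‖ ^ ((d : ℝ) + 2 * s)) with hI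
  have hI0 : 0 ≤ I := integral_nonneg fun z =>
    mul_nonneg (diffMajorant_nonneg hA (norm_nonneg z)) (by positivity)
  have hwle : ∀ x : Ed d, (1 + ‖R⁻¹ • x‖) ^ (-γ) ≤ R ^ γ * (1 + ‖x‖) ^ (-γ) := by
    intro x
    have h1 : 1 + ‖x‖ ≤ R * (1 + ‖R⁻¹ • x‖) := by
      rw [norm_smul, norm_inv, Real.norm_of_nonneg hR0.le, mul_add, mul_inv_cancel_left₀ hR0.ne']
      linarith
    have h2 := Real.rpow_le_rpow_of_nonpos (z := -γ) (by positivity) h1 (by linarith)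
    rw [Real.mul_rpow hR0.le (by positivity)] at h2
    calc (1 + ‖R⁻¹ • x‖) ^ (-γ) = R ^ γ * (R ^ (-γ) * (1 + ‖R⁻¹ • x‖) ^ (-γ)) := by
          rw [← mul_assoc, ← Real.rpow_add hR0, add_neg_cancel, Real.rpow_zero, one_mul]
      _ ≤ _ := mul_le_mul_of_nonneg_left h2 (by positivity)
  have hpt : ∀ᵐ x : Ed d, |f x ^ m| * (1 + ‖R⁻¹ • x‖) ^ (-γ) ≤
      (B ^ (m - 1) * R ^ γ * c⁻¹) * (f x * ρ x) := by
    filter_upwards [hfB, hρ.ae_rpow_le hd hγ₀0 hγ0] with x h1 h2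
    have h3 : f x ^ m ≤ B ^ (m - 1) * f x := by
      have : f x ^ m = f x ^ (m - 1) * f x := by
        nth_rewrite 3 [← Real.rpow_one (f x)]
        rw [← Real.rpow_add' (hf0 x) (by linarith), sub_add_cancel]
      rw [this]
      exact mul_le_mul_of_nonneg_right (Real.rpow_le_rpow (hf0 x) h1 (by linarith)) (hf0 x)
    rw [abs_of_nonneg (Real.rpow_nonneg (hf0 x) m)]
    calc f x ^ m * (1 + ‖R⁻¹ • x‖) ^ (-γ)
        ≤ (B ^ (m - 1) * f x) * (R ^ γ * (c⁻¹ * ρ x)) :=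
          mul_le_mul h3 ((hwle x).trans (mul_le_mul_of_nonneg_left h2 (by positivity)))
            (by positivity) (mul_nonneg (by positivity) (hf0 x))
      _ = _ := by ring
  have hvm : Measurable fun x => f x ^ m := hf.pow_const m
  have hvw : Integrable fun x => |f x ^ m| * (1 + ‖R⁻¹ • x‖) ^ (-γ) := by
    refine (hfρ.const_mul (B ^ (m - 1) * R ^ γ * c⁻¹)).mono' ?_ ?_
    · refine Measurable.aestronglyMeasurable ?_
      have := (measurable_const_smul (R⁻¹ : ℝ) (α := Ed d)).norm
      exact (continuous_abs.measurable.comp hvm).mul ((measurable_const.add this).pow_const _)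
    · filter_upwards [hpt] with x hx
      rwa [Real.norm_of_nonneg (by positivity)]
  have hInt : ∫ x, |f x ^ m| * (1 + ‖R⁻¹ • x‖) ^ (-γ) ≤ (B ^ (m - 1) * R ^ γ * c⁻¹) * M := by
    refine (integral_mono_ae hvw (hfρ.const_mul _) hpt).trans ?_
    rw [integral_const_mul]
    exact mul_le_mul_of_nonneg_left hfM (by positivity)
  refine (hχ.abs_gagliardoE_smul_le hd hκ hs1 hγ0 hγs hA hR0 hvm hvw).trans ?_
  have hRpow : R ^ (γ - 2 * s) = R ^ γ * R ^ (-(2 * s)) := by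
    rw [← Real.rpow_add hR0, sub_eq_add_neg]
  calc _ ≤ (κ / 2) * (((B ^ (m - 1) * R ^ γ * c⁻¹) * M) * (R ^ (-(2 * s)) * I)) := by
        gcongr
    _ = _ := by rw [hRpow]; ring

theorem gagliardoE_const_mul_right (d : ℕ) (s κ a : ℝ) (v w : Ed d → ℝ) :
    gagliardoE d s κ v (fun x => a * w x) = a * gagliardoE d s κ v w := by
  unfold gagliardoE
  rw [mul_left_comm a, ← integral_const_mul a]
  congr 1
  exact integral_congr_ae (Eventually.of_forall fun p => by simp only; ring)

theorem IsCutoff.isTestFn_mul {d : ℕ} {γ A R : ℝ} {χ : Ed d → ℝ} {θ : ℝ → ℝ}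
    (hχ : IsCutoff d γ A χ) (hR : 0 < R) (hθ : ContDiff ℝ (⊤ : ℕ∞) θ)
    (hθc : HasCompactSupport θ) (hθt : tsupport θ ⊆ Ioi 0) :
    IsTestFn d fun p => θ p.2 * χ (R⁻¹ • p.1) := by
  have hχR : HasCompactSupport fun x => χ (R⁻¹ • x) :=
    hχ.hasCompactSupport.comp_smul (inv_ne_zero hR.ne')
  have hsub : Function.support (fun p : Ed d × ℝ => θ p.2 * χ (R⁻¹ • p.1)) ⊆
      tsupport (fun x => χ (R⁻¹ • x)) ×ˢ tsupport θ := fun p hp =>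
    ⟨subset_tsupport _ (right_ne_zero_of_mul hp), subset_tsupport _ (left_ne_zero_of_mul hp)⟩
  refine ⟨(hθ.comp contDiff_snd).mul (hχ.contDiff.comp (contDiff_fst.const_smul R⁻¹)),
    HasCompactSupport.of_support_subset_isCompact (hχR.isCompact.prod hθc.isCompact) hsub, ?_⟩
  intro p hp
  have := closure_minimal hsub ((isClosed_tsupport _).prod (isClosed_tsupport _)) hp
  exact ⟨mem_univ _, hθt this.2⟩

/-- The total mass of a solution has vanishing distributional time derivative. -/
theorem WeakSolCore.integral_deriv_mul_mass_eq_zero {d : ℕ} {s m κ γ₀ γ c C : ℝ}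
    {ρ : Ed d → ℝ} {u : Ed d → ℝ → ℝ} (hu : WeakSolCore d s m κ ρ u)
    (hρ : AdmissibleWeight d ρ γ₀ γ c C) (hd : 0 < d) (hκ : 0 < κ) (hs1 : s < 1)
    (hγ₀0 : 0 ≤ γ₀) (hγ0 : 0 ≤ γ) (hγs : γ < 2 * s) (hm : 1 < m) {θ : ℝ → ℝ}
    (hθ : ContDiff ℝ (⊤ : ℕ∞) θ) (hθc : HasCompactSupport θ) (hθt : tsupport θ ⊆ Ioi 0) :
    ∫ t, deriv θ t * (∫ x : Ed d, u x t * ρ x) = 0 := by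
  obtain ⟨A, χ, hA, hχ⟩ := exists_isCutoff d hγ0
  obtain ⟨M, hM⟩ := hu.massBound
  obtain ⟨τ, hτ0, hτ⟩ : ∃ τ : ℝ, 0 < τ ∧ ∀ t, t ≤ τ → θ t = 0 := by
    have hK : IsCompact (insert (1 : ℝ) (tsupport θ)) := hθc.insert 1
    obtain ⟨a, ha, hamin⟩ := hK.exists_isLeast (insert_nonempty _ _)
    have hapos : 0 < a := by
      rcases ha with rfl | ha
      · exact one_pos
      · exact hθt ha
    refine ⟨a / 2, half_pos hapos, fun t ht => image_eq_zero_of_notMem_tsupport fun h => ?_⟩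
    linarith [hamin (Or.inr h)]
  obtain ⟨B, hB⟩ := hu.essBdd τ hτ0
  have hBslice : ∀ᵐ t : ℝ, ∀ᵐ x : Ed d, τ < t → u x t ≤ B := by
    have hms : MeasurableSet {p : Ed d × ℝ | τ < p.2 → u p.1 p.2 ≤ B} := by
      have h1 : MeasurableSet {p : Ed d × ℝ | τ < p.2} :=
        measurableSet_lt measurable_const measurable_snd
      have h2 : MeasurableSet {p : Ed d × ℝ | u p.1 p.2 ≤ B} :=
        measurableSet_le hu.measurable measurable_const
      exact h1.imp h2
    exact (Measure.ae_ae_comm (μ := (volume : Measure (Ed d))) (ν := (volume : Measure ℝ))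
      (p := fun x t => τ < t → u x t ≤ B) hms).1 (Measure.ae_ae_of_ae_prod hB)
  have hslice : ∀ t, Measurable fun x => u x t := fun t =>
    hu.measurable.comp (measurable_id.prodMk measurable_const)
  have hθi : Integrable θ := hθ.continuous.integrable_of_hasCompactSupport hθc
  have hθ'cont : Continuous (deriv θ) := hθ.continuous_deriv (by simp)
  have hθ'i : Integrable (deriv θ) := hθ'cont.integrable_of_hasCompactSupport hθc.deriv
  set R : ℕ → ℝ := fun n => (n : ℝ) + 1 with hRdef
  have hR1 : ∀ n, 1 ≤ R n := fun n => by simp [hRdef]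
  have hR0 : ∀ n, 0 < R n := fun n => one_pos.trans_le (hR1 n)
  have hRtop : Tendsto R atTop atTop := tendsto_natCast_atTop_atTop.atTop_add tendsto_const_nhds
  set J : ℕ → ℝ := fun n => ∫ t in Ioi (0 : ℝ), ∫ x : Ed d,
    u x t * (deriv θ t * χ ((R n)⁻¹ • x)) * ρ x with hJ
  set Q : ℝ := (κ / 2) * ((max B 0) ^ (m - 1) * c⁻¹ * M *
    ∫ z : Ed d, diffMajorant γ A ‖z‖ * (1 / ‖z‖ ^ ((d : ℝ) + 2 * s))) with hQ
  have hJle : ∀ n, |J n| ≤ (∫ t in Ioi (0 : ℝ), |θ t|) * (Q * (R n) ^ (γ - 2 * s)) := by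
    intro n
    have hw := hu.weakForm _ (hχ.isTestFn_mul (hR0 n) hθ hθc hθt)
    have hderiv : ∀ (t : ℝ) (x : Ed d),
        deriv (fun r => θ r * χ ((R n)⁻¹ • x)) t = deriv θ t * χ ((R n)⁻¹ • x) := fun t x =>
      deriv_mul_const_field _
    simp only [hderiv, gagliardoE_const_mul_right] at hw
    have hJeq : J n = ∫ t in Ioi (0 : ℝ), θ t *
        gagliardoE d s κ (fun x => u x t ^ m) (fun x => χ ((R n)⁻¹ • x)) := by
      simp only [hJ]; linarith
    rw [hJeq, ← integral_mul_const, ← Real.norm_eq_abs]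
    refine norm_integral_le_of_norm_le (hθi.abs.mul_const _).integrableOn ?_
    filter_upwards [hM, ae_restrict_of_ae hBslice] with t h1 h2
    rw [norm_mul, Real.norm_eq_abs, Real.norm_eq_abs]
    rcases le_or_gt t τ with ht | ht
    · simp [hτ t ht]
    · refine mul_le_mul_of_nonneg_left ?_ (abs_nonneg _)
      exact hχ.abs_gagliardoE_rpow_le hρ hd hκ hs1 hγ₀0 hγ0 hγs hA hm (hR1 n) (hslice t)
        (fun x => hu.nonneg x t) (le_max_right B 0)
        (h2.mono fun x hx => (hx ht).trans (le_max_left B 0)) h1.1 h1.2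
  have hJ0 : Tendsto J atTop (𝓝 0) := by
    refine squeeze_zero_norm (fun n => hJle n) ?_
    have h1 : Tendsto (fun n => (R n) ^ (γ - 2 * s)) atTop (𝓝 0) := by
      have := (tendsto_rpow_neg_atTop (y := 2 * s - γ) (by linarith)).comp hRtop
      simpa [Function.comp_def] using this
    simpa using (h1.const_mul Q).const_mul (∫ t in Ioi (0 : ℝ), |θ t|)
  have hJlim : Tendsto J atTop
      (𝓝 (∫ t in Ioi (0 : ℝ), deriv θ t * ∫ x : Ed d, u x t * ρ x)) := by
    refine tendsto_integral_of_dominated_convergence (fun t => |deriv θ t| * M) (fun n => ?_)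
      (hθ'i.abs.mul_const M).integrableOn (fun n => ?_) ?_
    · have hmeas : Measurable (Function.uncurry fun (x : Ed d) (t : ℝ) =>
          u x t * (deriv θ t * χ ((R n)⁻¹ • x)) * ρ x) := by
        have h1 : Measurable fun p : Ed d × ℝ => u p.1 p.2 := hu.measurable
        have h2 : Measurable fun p : Ed d × ℝ => deriv θ p.2 :=
          hθ'cont.measurable.comp measurable_snd
        have h3 : Measurable fun p : Ed d × ℝ => χ ((R n)⁻¹ • p.1) :=
          hχ.contDiff.continuous.measurable.comp
            ((measurable_const_smul ((R n)⁻¹ : ℝ)).comp measurable_fst)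
        exact (h1.mul (h2.mul h3)).mul (hρ.2.2.1.comp measurable_fst)
      exact hmeas.stronglyMeasurable.integral_prod_left.aestronglyMeasurable
    · filter_upwards [hM] with t ht
      refine (norm_integral_le_of_norm_le (ht.1.const_mul |deriv θ t|)
        (Eventually.of_forall fun x => ?_)).trans ?_
      · have hρ0 := (hρ.2.2.2.1 x).le
        have hu0 := hu.nonneg x t
        simp only [Real.norm_eq_abs, abs_mul, abs_of_nonneg hρ0, abs_of_nonneg hu0,
          abs_of_nonneg (hχ.nonneg _)]
        have := mul_le_mul_of_nonneg_left (hχ.le_one ((R n)⁻¹ • x))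
          (mul_nonneg (abs_nonneg (deriv θ t)) (mul_nonneg hu0 hρ0))
        linarith
      · rw [integral_const_mul]
        exact mul_le_mul_of_nonneg_left ht.2 (abs_nonneg _)
    · filter_upwards [hM] with t ht
      rw [← integral_const_mul]
      refine tendsto_integral_of_dominated_convergence (fun x => |deriv θ t| * (u x t * ρ x))
        (fun n => ?_) (ht.1.const_mul _) (fun n => Eventually.of_forall fun x => ?_)
        (Eventually.of_forall fun x => ?_)
      · have h3 : Measurable fun x : Ed d => χ ((R n)⁻¹ • x) :=
          hχ.contDiff.continuous.measurable.comp (measurable_const_smul _)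
        exact (((hslice t).mul (measurable_const.mul h3)).mul hρ.2.2.1).aestronglyMeasurable
      · have hρ0 := (hρ.2.2.2.1 x).le
        have hu0 := hu.nonneg x t
        simp only [Real.norm_eq_abs, abs_mul, abs_of_nonneg hρ0, abs_of_nonneg hu0,
          abs_of_nonneg (hχ.nonneg _)]
        have := mul_le_mul_of_nonneg_left (hχ.le_one ((R n)⁻¹ • x))
          (mul_nonneg (abs_nonneg (deriv θ t)) (mul_nonneg hu0 hρ0))
        linarith
      · refine tendsto_const_nhds.congr' ?_
        filter_upwards [hRtop.eventually_ge_atTop ‖x‖] with n hn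
        rw [hχ.eq_one]
        · ring
        · rw [norm_smul, norm_inv, Real.norm_of_nonneg (hR0 n).le, inv_mul_le_one₀ (hR0 n)]
          exact hn
  rw [← tendsto_nhds_unique hJlim hJ0]
  refine (setIntegral_eq_integral_of_forall_compl_eq_zero fun t ht => ?_).symm
  have : deriv θ t = 0 := by
    by_contra h
    exact ht (hθt (support_deriv_subset h))
  rw [this, zero_mul]

/-- The total mass of a solution is constant in time. -/
theorem WeakSolCore.exists_mass_ae_eq {d : ℕ} {s m κ γ₀ γ c C : ℝ}
    {ρ : Ed d → ℝ} {u : Ed d → ℝ → ℝ} (hu : WeakSolCore d s m κ ρ u)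
    (hρ : AdmissibleWeight d ρ γ₀ γ c C) (hd : 0 < d) (hκ : 0 < κ) (hs1 : s < 1)
    (hγ₀0 : 0 ≤ γ₀) (hγ0 : 0 ≤ γ) (hγs : γ < 2 * s) (hm : 1 < m) :
    ∃ K : ℝ, ∀ᵐ t : ℝ, t ∈ Ioi (0 : ℝ) → ∫ x : Ed d, u x t * ρ x = K := by
  refine ae_eq_const_of_integral_deriv_mul_eq_zero ?_ fun θ hθ hθc hθt =>
    hu.integral_deriv_mul_mass_eq_zero hρ hd hκ hs1 hγ₀0 hγ0 hγs hm hθ hθc hθt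
  obtain ⟨M, hM⟩ := hu.massBound
  have hmeas : Measurable (Function.uncurry fun (x : Ed d) (t : ℝ) => u x t * ρ x) :=
    hu.measurable.mul (hρ.2.2.1.comp measurable_fst)
  refine locallyIntegrableOn_of_locallyIntegrable_restrict
    (MemLp.locallyIntegrable (p := ⊤) (memLp_top_of_bound
      hmeas.stronglyMeasurable.integral_prod_left.aestronglyMeasurable M ?_) le_top)
  filter_upwards [hM] with t ht
  rw [Real.norm_of_nonneg (integral_nonneg fun x => mul_nonneg (hu.nonneg x t)
    (hρ.2.2.2.1 x).le)]
  exact ht.2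

/-- A property holding almost everywhere on `(0,∞)` holds frequently along any essential
one-sided neighbourhood of the origin. -/
theorem frequently_nhdsWithin_of_ae_Ioi {p : ℝ → Prop} (hp : ∀ᵐ t : ℝ, t ∈ Ioi (0 : ℝ) → p t)
    {N : Set ℝ} (hN : volume N = 0) : ∃ᶠ t in 𝓝[Ioi (0 : ℝ) \ N] 0, p t := by
  intro hcon
  obtain ⟨ε, hε, hball⟩ := Metric.mem_nhdsWithin_iff.1 hcon
  have hsub : Ioo 0 ε ⊆ N ∪ {t | ¬ (t ∈ Ioi (0 : ℝ) → p t)} := by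
    intro t ht
    by_cases htN : t ∈ N
    · exact Or.inl htN
    · refine Or.inr fun h => hball ⟨?_, ht.1, htN⟩ (h ht.1)
      simpa [abs_of_pos ht.1] using ht.2
  have h0 : volume (Ioo 0 ε) = 0 :=
    measure_mono_null hsub (measure_union_null hN (ae_iff.1 hp))
  rw [Real.volume_Ioo, sub_zero, ENNReal.ofReal_eq_zero] at h0
  linarith

/-- **Conservation of mass.** If `u` is a weak solution of
`ρ u_t + (-Δ)^s(u^m) = 0` with initial datum the positive finite Radon
measure `μ`, then `∫ u(x,t) ρ(x) dx = μ(ℝ^d)` for a.e. `t > 0`. -/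
theorem mass_conservation
    (d : ℕ) (s m κ γ₀ γ c C : ℝ)
    (hs0 : 0 < s) (hs1 : s < 1) (hd : 2 * s < (d : ℝ)) (hm : 1 < m) (hκ : 0 < κ)
    (hγ₀0 : 0 ≤ γ₀) (hγ₀γ : γ₀ ≤ γ) (hγs : γ < 2 * s) (hγd : γ ≤ (d : ℝ) - 2 * s)
    (ρ : Ed d → ℝ) (hρ : AdmissibleWeight d ρ γ₀ γ c C)
    (μ : Measure (Ed d)) (hμ : IsFiniteMeasure μ)
    (u : Ed d → ℝ → ℝ) (hu : IsWeakSolution d s m κ ρ μ u) :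
    ∀ᵐ t ∂(volume.restrict (Ioi (0 : ℝ))),
      (∫ x : Ed d, u x t * ρ x) = (μ univ).toReal := by
  have hd0 : 0 < d := by
    have : (0 : ℝ) < d := by linarith
    exact_mod_cast this
  obtain ⟨K, hK⟩ := hu.1.exists_mass_ae_eq hρ hd0 hκ hs1 hγ₀0 (hγ₀0.trans hγ₀γ) hγs hm
  obtain ⟨N, hN, htrace⟩ := hu.2
  have hlim := htrace (fun _ => 1) continuous_const ⟨1, fun _ => by simp⟩
  simp only [one_mul, integral_const, smul_eq_mul, mul_one] at hlim
  have hKμ : K = (μ univ).toReal :=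
    (tendsto_nhds_unique_of_frequently_eq hlim tendsto_const_nhds
      (frequently_nhdsWithin_of_ae_Ioi hK hN)).symm
  rw [← hKμ]
  exact (ae_restrict_iff' measurableSet_Ioi).2 hK
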